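/- (Division by a nonreal zero preserves the space and the norm.) Assume S_μ ∩ ℝ = ∅ and let f(z) = ⟨ξ(z), φ⟩ for some φ ∈ H. Suppose w is a nonreal point of ℂ ∖ S_μ with f(w) = 0. Then φ ∈ ran(A − wI), the vector χ := (A − w̄I)(A − wI)⁻¹φ satisfies ‖χ‖ = ‖φ‖, and ⟨ξ(z), χ⟩ = f(z)·(z − w̄)/(z − w) for all z ∈ ℂ ∖ S_μ, z ≠ w; hence the function g(z) := f(z)(z − w̄)(z − w)⁻¹ (with its removable singularity at w removed) belongs to Ĥ_μ := {φ̂ : φ ∈ H} and has the same norm as f in any inner product on Ĥ_μ that makes Φ_μ an isometry. -/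

import Mathlib

/-!
For `z̄` in the resolvent set of `B`, the vector `ψ(z̄)` is nonzero (`psiFun_ne_zero`) and orthogonal
to `ran(A - z·I)` (`psiFun_orthogonal`). Regularity and closedness of `A` make that range closed,
and its orthogonal complement is a line, so the range is exactly the set of vectors orthogonal to
`ψ(z̄)` (`mem_ranShift_of_inner_eq_zero`).

At `w ∉ S_μ` the gauge `μ` is not in `ran(A - w·I)`, so `⟪μ, ψ(w̄)⟫ ≠ 0`; hence `f(w) = 0` says that
`φ` is orthogonal to `ψ(w̄)`, and `φ = (A - w·I)φ₁` for some `φ₁`. The Cayley-type map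
`(A - w·I)φ₁ ↦ (A - w̄·I)φ₁` is isometric because `A` is symmetric (`norm_shift_conj`). Finally,
`⟪ξ(z), (A - z·I)φ₁⟫ = 0` gives `⟪ξ(z), (A - a·I)φ₁⟫ = (z - a)⟪ξ(z), φ₁⟫` for every `a`; comparing
`a = w` and `a = w̄` yields the factor `(z - w̄)/(z - w)`.
-/

open scoped ComplexConjugate
open Complex

noncomputable section

variable {H : Type*} [NormedAddCommGroup H] [InnerProductSpace ℂ H] [CompleteSpace H]

local notation "⟪" x ", " y "⟫" => @inner ℂ _ _ x y

/-- The range of `T - z·I`, as a subset of `H`. -/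
def ranShift (T : H →ₗ.[ℂ] H) (z : ℂ) : Set H :=
  Set.range fun φ : T.domain => T φ - z • (φ : H)

/-- `ψ` belongs to the kernel of `T - z·I`. -/
def InKerShift (T : H →ₗ.[ℂ] H) (z : ℂ) (ψ : H) : Prop :=
  ∃ h : ψ ∈ T.domain, T ⟨ψ, h⟩ = z • ψ

/-- `H = ran(A - z·I) ∔ span{μ}` (direct algebraic sum): every vector has a unique
decomposition `v = r + c • μ` with `r ∈ ran(A - z·I)`. -/
def GaugeSplit (A : H →ₗ.[ℂ] H) (μ : H) (z : ℂ) : Prop :=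
  ∀ v : H, ∃! c : ℂ, v - c • μ ∈ ranShift A z

/-- The exceptional set `S_μ`. -/
def Smu (A : H →ₗ.[ℂ] H) (μ : H) : Set ℂ := {z | ¬ GaugeSplit A μ z}

/-- `A` is simple: `⋂_{Im z ≠ 0} ran(A - z·I) = {0}`. -/
def IsSimpleOp (A : H →ₗ.[ℂ] H) : Prop :=
  (⋂ z ∈ {w : ℂ | w.im ≠ 0}, ranShift A z) = ({0} : Set H)

/-- `A` is regular: every `z ∈ ℂ` is a point of regular type, i.e. `A - z·I` has a
bounded inverse on its range. -/
def IsRegularOp (A : H →ₗ.[ℂ] H) : Prop :=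
  ∀ z : ℂ, ∃ c : ℝ, 0 < c ∧ ∀ φ : A.domain, c * ‖(φ : H)‖ ≤ ‖A φ - z • (φ : H)‖

/-- `A` has deficiency indices `(1,1)`: for every `z ∈ ℂ`, the kernel of `A* - z·I`
is spanned by a single nonzero vector. -/
def DefIndicesOneOne (A : H →ₗ.[ℂ] H) : Prop :=
  ∀ z : ℂ, ∃ v : H, v ≠ 0 ∧
    {ψ : H | InKerShift A.adjoint z ψ} = {w : H | ∃ c : ℂ, w = c • v}

/-- `A` is symmetric. -/
def IsSymmetricPOp (A : H →ₗ.[ℂ] H) : Prop :=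
  ∀ x y : A.domain, ⟪(A x : H), (y : H)⟫ = ⟪(x : H), (A y : H)⟫

/-- The data of a densely defined, closed, symmetric, simple, regular operator with
deficiency indices (1,1): the setting of Krein's theory. -/
structure KreinOp (H : Type*) [NormedAddCommGroup H] [InnerProductSpace ℂ H]
    [CompleteSpace H] where
  A : H →ₗ.[ℂ] H
  dense : Dense (A.domain : Set H)
  closed : A.IsClosed
  symm : IsSymmetricPOp A
  simple : IsSimpleOp A
  regular : IsRegularOp A
  defOneOne : DefIndicesOneOne A

/-- `B` is a self-adjoint extension of `A` (within `H`). -/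
def IsSAExt (A B : H →ₗ.[ℂ] H) : Prop :=
  A ≤ B ∧ IsSelfAdjoint B

/-- `R z` is, for every `z ∈ res`, the (everywhere defined, bounded) inverse of `B - z·I`;
in particular `res ⊆ ℂ ∖ Sp(B)`. -/
def IsResolventOn (B : H →ₗ.[ℂ] H) (res : Set ℂ) (R : ℂ → H →L[ℂ] H) : Prop :=
  ∀ z ∈ res, (∀ v : H, ∃ h : R z v ∈ B.domain, B ⟨R z v, h⟩ - z • R z v = v)
    ∧ ∀ φ : B.domain, R z ((B φ : H) - z • (φ : H)) = (φ : H)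

/-- `ψ(z) = ψ₀ + (z - z₀)(B - z·I)⁻¹ ψ₀`. -/
def psiFun (R : ℂ → H →L[ℂ] H) (z₀ : ℂ) (ψ₀ : H) (z : ℂ) : H :=
  ψ₀ + (z - z₀) • R z ψ₀

/-- `ξ(z) = ψ(z̄) / ⟪μ, ψ(z̄)⟫`. -/
def xiFun (μ : H) (R : ℂ → H →L[ℂ] H) (z₀ : ℂ) (ψ₀ : H) (z : ℂ) : H :=
  (⟪μ, psiFun R z₀ ψ₀ (conj z)⟫)⁻¹ • psiFun R z₀ ψ₀ (conj z)

/-- `P` is the orthogonal projection onto `Ker(B - x·I)`. -/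
def IsEigenProjection (B : H →ₗ.[ℂ] H) (x : ℝ) (P : H →L[ℂ] H) : Prop :=
  IsSelfAdjoint P ∧ (∀ v : H, P (P v) = P v) ∧ ∀ v : H, (P v = v ↔ InKerShift B (x : ℂ) v)


/-- The range of `A - z·I` as a subspace: the image of the graph of `A` under
`(x, y) ↦ y - z • x`. -/
def ranShiftSub (A : H →ₗ.[ℂ] H) (z : ℂ) : Submodule ℂ H :=
  LinearMap.range
    (((ContinuousLinearMap.snd ℂ H H - z • ContinuousLinearMap.fst ℂ H H).comp
      A.graph.subtypeL : A.graph →L[ℂ] H) : A.graph →ₗ[ℂ] H)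

lemma mem_ranShiftSub (A : H →ₗ.[ℂ] H) (z : ℂ) (v : H) :
    v ∈ ranShiftSub A z ↔ v ∈ ranShift A z := by
  constructor
  · rintro ⟨⟨⟨x, y⟩, hp⟩, rfl⟩
    obtain ⟨u, hu, hu'⟩ := (LinearPMap.mem_graph_iff A).1 hp
    simp only at hu hu'
    subst hu hu'
    exact ⟨u, rfl⟩
  · rintro ⟨u, rfl⟩
    exact ⟨⟨((u : H), A u), LinearPMap.mem_graph A u⟩, rfl⟩

/-- The graph of a closed operator is complete, and at a point of regular type
`(x, y) ↦ y - z • x` is bounded below on it, so its image is closed. -/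
lemma isClosed_ranShiftSub {A : H →ₗ.[ℂ] H} (hcl : A.IsClosed) (hreg : IsRegularOp A) (z : ℂ) :
    IsClosed (ranShiftSub A z : Set H) := by
  obtain ⟨c, hc, hb⟩ := hreg z
  have : CompleteSpace A.graph := IsClosed.completeSpace_coe (hs := hcl)
  set f : A.graph →L[ℂ] H := (ContinuousLinearMap.snd ℂ H H - z • ContinuousLinearMap.fst ℂ H H).comp
      A.graph.subtypeL with hf
  have hanti : AntilipschitzWith (Real.toNNReal (1 + (1 + ‖z‖) / c)) f := by
    refine f.antilipschitz_of_bound fun p => ?_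
    obtain ⟨⟨x, y⟩, hp⟩ := p
    obtain ⟨u, hu, hu'⟩ := (LinearPMap.mem_graph_iff A).1 hp
    simp only at hu hu'
    subst hu hu'
    rw [Real.coe_toNNReal _ (by positivity)]
    change max ‖(u : H)‖ ‖A u‖ ≤ (1 + (1 + ‖z‖) / c) * ‖A u - z • (u : H)‖
    have h1 : ‖(u : H)‖ ≤ ‖A u - z • (u : H)‖ / c := by
      rw [le_div_iff₀ hc, mul_comm]
      exact hb u
    have h2 : ‖A u‖ ≤ ‖A u - z • (u : H)‖ + ‖z‖ * ‖(u : H)‖ := by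
      rw [← norm_smul]
      exact norm_le_norm_sub_add _ _
    have h3 := mul_le_mul_of_nonneg_left h1 (norm_nonneg z)
    have h4 : (1 + (1 + ‖z‖) / c) * ‖A u - z • (u : H)‖ = ‖A u - z • (u : H)‖
        + ‖A u - z • (u : H)‖ / c + ‖z‖ * (‖A u - z • (u : H)‖ / c) := by
      field_simp
      ring
    have h5 : 0 ≤ ‖z‖ * (‖A u - z • (u : H)‖ / c) := by positivity
    have h6 : 0 ≤ ‖A u - z • (u : H)‖ / c := by positivity
    rw [h4]
    exact max_le (by linarith [norm_nonneg (A u - z • (u : H))]) (by linarith)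
  exact hanti.isClosed_range f.uniformContinuous

/-- `ran(A - z·I)ᗮ ⊆ Ker(A* - z̄·I)`. -/
lemma inKerShift_of_orthogonal {A : H →ₗ.[ℂ] H} (hd : Dense (A.domain : Set H)) {z : ℂ} {u : H}
    (hu : ∀ x : A.domain, ⟪u, A x - z • (x : H)⟫ = 0) : InKerShift A.adjoint (conj z) u := by
  have key : ∀ x : A.domain, ⟪conj z • u, (x : H)⟫ = ⟪u, A x⟫ := fun x => by
    have := hu x
    rw [inner_sub_right, inner_smul_right, sub_eq_zero] at this
    rw [inner_smul_left, this, Complex.conj_conj]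
  have hm := LinearPMap.mem_adjoint_domain_of_exists u ⟨_, key⟩
  exact ⟨hm, LinearPMap.adjoint_apply_eq hd ⟨u, hm⟩ key⟩

/-- Because the deficiency spaces are lines, one nonzero vector orthogonal to the closed subspace
`ran(A - z·I)` already determines it. -/
lemma mem_ranShift_of_inner_eq_zero (S : KreinOp H) {z : ℂ} {ψ v : H} (hψ : ψ ≠ 0)
    (hort : ∀ x : S.A.domain, ⟪ψ, S.A x - z • (x : H)⟫ = 0) (hv : ⟪ψ, v⟫ = 0) :
    v ∈ ranShift S.A z := by
  rw [← mem_ranShiftSub, ← SetLike.mem_coe,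
    ← (isClosed_ranShiftSub S.closed S.regular z).submodule_topologicalClosure_eq,
    ← Submodule.orthogonal_orthogonal_eq_closure, SetLike.mem_coe, Submodule.mem_orthogonal]
  intro u hu
  have hu' : InKerShift S.A.adjoint (conj z) u := inKerShift_of_orthogonal S.dense fun x =>
    (Submodule.mem_orthogonal' _ u).1 hu _ ((mem_ranShiftSub _ _ _).2 ⟨x, rfl⟩)
  obtain ⟨e, -, he⟩ := S.defOneOne (conj z)
  obtain ⟨a, rfl⟩ : ∃ a : ℂ, u = a • e := he.subset hu'
  obtain ⟨b, rfl⟩ : ∃ b : ℂ, ψ = b • e := he.subset (inKerShift_of_orthogonal S.dense hort)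
  have hb : b ≠ 0 := fun h => hψ (by rw [h, zero_smul])
  rw [inner_smul_left, mul_eq_zero] at hv
  rw [inner_smul_left, hv.resolve_left ((map_ne_zero _).2 hb), mul_zero]

/-- `ψ(z)` is orthogonal to `ran(A - z̄·I)`: since `B` is symmetric, the resolvent term
contributes `(z̄ - z̄₀)⟪ψ₀, x⟫`, which compensates the change from `z̄₀` to `z̄`. -/
lemma psiFun_orthogonal {A B : H →ₗ.[ℂ] H} (hd : Dense (A.domain : Set H)) (hB : IsSAExt A B)
    {res : Set ℂ} {R : ℂ → H →L[ℂ] H} (hR : IsResolventOn B res R) {z₀ : ℂ} {ψ₀ : H}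
    (hψ₀ : InKerShift A.adjoint z₀ ψ₀) {z : ℂ} (hz : conj z ∈ res) (x : A.domain) :
    ⟪psiFun R z₀ ψ₀ (conj z), A x - z • (x : H)⟫ = 0 := by
  obtain ⟨h, hψ⟩ := hψ₀
  have h1 : ⟪ψ₀, A x⟫ = conj z₀ * ⟪ψ₀, (x : H)⟫ := by
    have := LinearPMap.adjoint_isFormalAdjoint hd ⟨ψ₀, h⟩ x
    rw [hψ, inner_smul_left] at this
    exact this.symm
  obtain ⟨hr, hBr⟩ := (hR _ hz).1 ψ₀
  have h2 : ⟪R (conj z) ψ₀, A x⟫ = ⟪ψ₀, (x : H)⟫ + z * ⟪R (conj z) ψ₀, (x : H)⟫ := by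
    have hsymm : B.IsFormalAdjoint B := by
      have := LinearPMap.adjoint_isFormalAdjoint hB.2.dense_domain
      rwa [LinearPMap.isSelfAdjoint_def.1 hB.2] at this
    have h3 := hsymm ⟨_, hr⟩ ⟨x, hB.1.1 x.2⟩
    rw [← hB.1.2 (x := x) (y := ⟨x, hB.1.1 x.2⟩) rfl, sub_eq_iff_eq_add.1 hBr, inner_add_left,
      inner_smul_left, Complex.conj_conj] at h3
    exact h3.symm
  simp only [psiFun, inner_add_left, inner_sub_right, inner_smul_left, inner_smul_right, h1, h2,
    map_sub, Complex.conj_conj]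
  ring

/-- If `ψ(z) = 0`, then `ψ₀ = -(z - z₀)(B - z·I)⁻¹ψ₀` is an eigenvector of `B` for `z₀`, which
lies in the resolvent set. -/
lemma psiFun_ne_zero {B : H →ₗ.[ℂ] H} {res : Set ℂ} {R : ℂ → H →L[ℂ] H}
    (hR : IsResolventOn B res R) {z₀ : ℂ} (hz₀ : z₀ ∈ res) {ψ₀ : H} (hne : ψ₀ ≠ 0)
    {z : ℂ} (hz : z ∈ res) : psiFun R z₀ ψ₀ z ≠ 0 := by
  intro h0
  obtain ⟨hr, hBr⟩ := (hR _ hz).1 ψ₀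
  have h1 : ψ₀ = -((z - z₀) • R z ψ₀) := eq_neg_of_add_eq_zero_left h0
  -- `r = (B - z·I)⁻¹ψ₀` satisfies `(B - z₀·I) r = 0`.
  have h2 : B ⟨R z ψ₀, hr⟩ - z₀ • R z ψ₀ = 0 := by
    have h3 : B ⟨R z ψ₀, hr⟩ - z₀ • R z ψ₀
        = (B ⟨R z ψ₀, hr⟩ - z • R z ψ₀) + (z - z₀) • R z ψ₀ := by module
    rw [h3, hBr]
    exact h0
  have h4 := (hR _ hz₀).2 ⟨R z ψ₀, hr⟩
  simp only [h2, map_zero] at h4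
  rw [← h4, smul_zero, neg_zero] at h1
  exact hne h1

/-- For symmetric `A`, `‖(A - z·I)x‖² = ‖Ax‖² - 2 Re z ⟪Ax, x⟫ + |z|²‖x‖²` with `⟪Ax, x⟫` real, so
conjugating `z` does not change it. -/
lemma norm_shift_conj {A : H →ₗ.[ℂ] H} (hA : IsSymmetricPOp A) (z : ℂ) (x : A.domain) :
    ‖A x - conj z • (x : H)‖ = ‖A x - z • (x : H)‖ := by
  have h : ⟪A x - conj z • (x : H), A x - conj z • (x : H)⟫
      = ⟪A x - z • (x : H), A x - z • (x : H)⟫ := by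
    simp only [inner_sub_left, inner_sub_right, inner_smul_left, inner_smul_right,
      Complex.conj_conj, hA x x]
    ring
  rw [inner_self_eq_norm_sq_to_K, inner_self_eq_norm_sq_to_K] at h
  exact (sq_eq_sq₀ (norm_nonneg _) (norm_nonneg _)).1 (by exact_mod_cast h)

/-- **Division by a nonreal zero.** Assume `S_μ ∩ ℝ = ∅`, let
`f(z) = ⟪ξ(z), φ⟫` and let `w ∉ S_μ` be nonreal with `f(w) = 0`. Then `φ ∈ ran(A - w·I)`,
say `φ = (A - w·I)φ₁`, the vector `χ = (A - w̄·I)φ₁ = (A - w̄·I)(A - w·I)⁻¹φ` has the same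
norm as `φ`, and `⟪ξ(z), χ⟫ = f(z)(z - w̄)/(z - w)` for `z ∈ ℂ ∖ S_μ`, `z ≠ w`; hence
`g(z) = f(z)(z - w̄)(z - w)⁻¹` belongs to `Ĥ_μ` with the same norm as `f`. -/
theorem statement14 [TopologicalSpace.SeparableSpace H]
    (S : KreinOp H)
    (B : H →ₗ.[ℂ] H) (hB : IsSAExt S.A B)
    (res : Set ℂ) (R : ℂ → H →L[ℂ] H) (hR : IsResolventOn B res R)
    (z₀ : ℂ) (hz₀ : z₀ ∈ res)
    (ψ₀ : H) (hψ₀ne : ψ₀ ≠ 0) (hψ₀ : InKerShift S.A.adjoint z₀ ψ₀)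
    (μ : H) (hSmuR : ∀ t : ℝ, (t : ℂ) ∉ Smu S.A μ)
    (w : ℂ) (hw : w ∉ Smu S.A μ) (hwim : w.im ≠ 0) (hwres : conj w ∈ res)
    (φ : H) (hfw : ⟪xiFun μ R z₀ ψ₀ w, φ⟫ = 0) :
    φ ∈ ranShift S.A w
    ∧ ∃ φ₁ : S.A.domain,
        (S.A φ₁ : H) - w • (φ₁ : H) = φ
        ∧ ‖(S.A φ₁ : H) - conj w • (φ₁ : H)‖ = ‖φ‖
        ∧ ∀ z : ℂ, z ∉ Smu S.A μ → conj z ∈ res → z ≠ w →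
            ⟪xiFun μ R z₀ ψ₀ z, (S.A φ₁ : H) - conj w • (φ₁ : H)⟫
              = ⟪xiFun μ R z₀ ψ₀ z, φ⟫ * (z - conj w) / (z - w) := by
  have hort : ∀ z : ℂ, conj z ∈ res → ∀ x : S.A.domain,
      ⟪psiFun R z₀ ψ₀ (conj z), S.A x - z • (x : H)⟫ = 0 := fun z hz x =>
    psiFun_orthogonal S.dense hB hR hψ₀ hz x
  have hψne : psiFun R z₀ ψ₀ (conj w) ≠ 0 := psiFun_ne_zero hR hz₀ hψ₀ne hwres
  have hμ : ⟪μ, psiFun R z₀ ψ₀ (conj w)⟫ ≠ 0 := by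
    intro h0
    have hμran : μ ∈ ranShift S.A w :=
      mem_ranShift_of_inner_eq_zero S hψne (hort w hwres) (inner_eq_zero_symm.1 h0)
    -- With `μ` in the range, `0 = 0 + 0 • μ = μ + (-1) • μ` violates uniqueness of the splitting.
    have hsplit : GaugeSplit S.A μ w := not_not.1 hw
    have h01 : (0 : ℂ) = -1 := (hsplit 0).unique
      (by
        rw [← mem_ranShiftSub]
        simp)
      (by simpa using hμran)
    norm_num at h01
  have hφ : ⟪psiFun R z₀ ψ₀ (conj w), φ⟫ = 0 := by
    rw [xiFun, inner_smul_left, mul_eq_zero] at hfw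
    exact hfw.resolve_left ((map_ne_zero _).2 (inv_ne_zero hμ))
  have hran := mem_ranShift_of_inner_eq_zero S hψne (hort w hwres) hφ
  refine ⟨hran, ?_⟩
  obtain ⟨φ₁, rfl⟩ := hran
  refine ⟨φ₁, rfl, norm_shift_conj S.symm w φ₁, fun z _ hz hzw => ?_⟩
  have hξ : ⟪xiFun μ R z₀ ψ₀ z, S.A φ₁⟫ = z * ⟪xiFun μ R z₀ ψ₀ z, (φ₁ : H)⟫ := by
    have h : ⟪xiFun μ R z₀ ψ₀ z, S.A φ₁ - z • (φ₁ : H)⟫ = 0 := by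
      rw [xiFun, inner_smul_left, hort z hz, mul_zero]
    rwa [inner_sub_right, inner_smul_right, sub_eq_zero] at h
  rw [eq_div_iff (sub_ne_zero.2 hzw)]
  simp only [inner_sub_right, inner_smul_right, hξ]
  ring

end
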